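/- arXiv:1907.05799 — 4 statements merged into one kernel-verified Lean document; each statement's English description precedes it below -/
import Mathlib

section
/- Let S ⊆ ℝ^d be a bounded measurable set, let μ be a probability measure on ℝ^d with μ(S) = 1, and let {S_i}_{i ∈ I} be a finite family of convex measurable subsets of S such that μ(S_i) > 0 for every i, μ(S_i ∩ S_j) = 0 for i ≠ j, μ(⋃_{i ∈ I} S_i) = 1, and diam(S_i) ≤ ρ for every i, where 0 < ρ ≤ 1 and diam denotes the Euclidean diameter. Let q : ℝ^d → ℝ take values in [0,1] on S, be differentiable on S with ‖∇q(x)‖₂ ≤ L for all x ∈ S, and satisfy the Taylor bound |q(x) − q(y) − ⟨∇q(y), x − y⟩| ≤ H‖x − y‖₂² for all x, y ∈ S. Define q̂ : S → ℝ by q̂(x) := (1/μ(S_i)) ∫_{S_i} q dμ whenever x lies in exactly one cell S_i (with arbitrary values on the μ-null remainder). Then for every p ∈ [1, ∞), ‖q − q̂‖_{L^p(μ)} ≤ 2(L + H)ρ. -/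
open MeasureTheory

/-- **Theorem 3.3 (error bound for the projected committor).**
Let `S ⊆ ℝ^d` be a bounded measurable set, `μ` a probability measure with `μ(S) = 1`, and
`{S_i}_{i ∈ I}` a finite family of convex measurable subsets of `S` with `μ(S_i) > 0`,
pairwise `μ`-null intersections, `μ(⋃ S_i) = 1` and Euclidean diameter at most `ρ ≤ 1`.
Let `q` take values in `[0,1]` on `S`, be differentiable on `S` with gradient `g` bounded by `L`
and a second-order Taylor bound with constant `H`.  If `q̂` equals the `μ`-average of `q` over
`S_i` at every point lying in exactly one cell `S_i`, then `‖q - q̂‖_{L^p(μ)} ≤ 2(L + H)ρ`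
for every `p ∈ [1, ∞)`. -/
theorem projected_committor_error_bound
    (d : ℕ) {ι : Type} [Fintype ι]
    (S : Set (EuclideanSpace ℝ (Fin d))) (hSbdd : Bornology.IsBounded S)
    (hSmeas : MeasurableSet S)
    (μ : Measure (EuclideanSpace ℝ (Fin d))) [IsProbabilityMeasure μ] (hμS : μ S = 1)
    (cell : ι → Set (EuclideanSpace ℝ (Fin d)))
    (hcellS : ∀ i, cell i ⊆ S)
    (hcellconv : ∀ i, Convex ℝ (cell i))
    (hcellmeas : ∀ i, MeasurableSet (cell i))
    (hcellpos : ∀ i, 0 < μ (cell i))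
    (hnull : ∀ i j, i ≠ j → μ (cell i ∩ cell j) = 0)
    (hcover : μ (⋃ i, cell i) = 1)
    (ρ : ℝ) (hρ0 : 0 < ρ) (hρ1 : ρ ≤ 1)
    (hdiam : ∀ i, EMetric.diam (cell i) ≤ ENNReal.ofReal ρ)
    (q : EuclideanSpace ℝ (Fin d) → ℝ)
    (hq01 : ∀ x ∈ S, q x ∈ Set.Icc (0 : ℝ) 1)
    (g : EuclideanSpace ℝ (Fin d) → EuclideanSpace ℝ (Fin d))
    (L H : ℝ)
    (hgrad : ∀ x ∈ S, HasGradientAt q (g x) x)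
    (hgradL : ∀ x ∈ S, ‖g x‖ ≤ L)
    (htaylor : ∀ x ∈ S, ∀ y ∈ S,
      |q x - q y - (inner ℝ (g y) (x - y) : ℝ)| ≤ H * ‖x - y‖ ^ 2)
    (qhat : EuclideanSpace ℝ (Fin d) → ℝ)
    (hqhat : ∀ x, ∀ i, x ∈ cell i → (∀ j, j ≠ i → x ∉ cell j) →
      qhat x = (μ (cell i)).toReal⁻¹ * ∫ y in cell i, q y ∂μ) :
    ∀ p : ℝ, 1 ≤ p →
      eLpNorm (fun x => q x - qhat x) (ENNReal.ofReal p) μ ≤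
        ENNReal.ofReal (2 * (L + H) * ρ) := by
  intro p _
  set C : ℝ := max (2 * (L + H) * ρ) 0 with hC
  have hC0 : 0 ≤ C := le_max_right _ _
  have hosc : ∀ i, ∀ x ∈ cell i, ∀ y ∈ cell i, |q x - q y| ≤ C := by
    intro i x hx y hy
    by_cases hxy : x = y
    · subst hxy
      simpa using hC0
    have hpos : 0 < ‖x - y‖ := norm_pos_iff.mpr (sub_ne_zero.mpr hxy)
    have ht := htaylor x (hcellS i hx) y (hcellS i hy)
    have hH : 0 ≤ H := by
      by_contra hneg
      push Not at hneg
      have h1 : H * ‖x - y‖ ^ 2 < 0 := mul_neg_of_neg_of_pos hneg (by positivity)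
      have h2 := (abs_nonneg _).trans ht
      linarith
    have hL : 0 ≤ L := (norm_nonneg _).trans (hgradL y (hcellS i hy))
    have hr : ‖x - y‖ ≤ ρ := by
      have h1 := (Metric.edist_le_ediam_of_mem hx hy).trans (hdiam i)
      rw [edist_dist, dist_eq_norm] at h1
      exact (ENNReal.ofReal_le_ofReal_iff hρ0.le).mp h1
    have hin : |(inner ℝ (g y) (x - y) : ℝ)| ≤ L * ρ :=
      (abs_real_inner_le_norm _ _).trans
        (mul_le_mul (hgradL y (hcellS i hy)) hr (norm_nonneg _) hL)
    have hsq : ‖x - y‖ ^ 2 ≤ ρ := by nlinarith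
    have hHs : H * ‖x - y‖ ^ 2 ≤ H * ρ := mul_le_mul_of_nonneg_left hsq hH
    have htri : |q x - q y| ≤ (L + H) * ρ := by
      have h3 := abs_add_le (q x - q y - (inner ℝ (g y) (x - y) : ℝ)) (inner ℝ (g y) (x - y) : ℝ)
      rw [sub_add_cancel] at h3
      linarith
    have : 0 ≤ (L + H) * ρ := by positivity
    refine le_trans ?_ (le_max_left _ _)
    linarith
  have hint : ∀ i, IntegrableOn q (cell i) μ := by
    intro i
    have hc : ContinuousOn q (cell i) := fun x hx =>
      (hgrad x (hcellS i hx)).hasFDerivAt.continuousAt.continuousWithinAt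
    refine Integrable.of_bound (C := 1) ?_ ?_
    · exact hc.aestronglyMeasurable (hcellmeas i)
    · refine (ae_restrict_iff' (hcellmeas i)).mpr (Filter.Eventually.of_forall fun x hx => ?_)
      have := hq01 x (hcellS i hx)
      rw [Real.norm_eq_abs, abs_le]
      exact ⟨by linarith [this.1], this.2⟩
  have hae1 : ∀ᵐ x ∂μ, x ∈ ⋃ i, cell i :=
    (prob_compl_eq_zero_iff (MeasurableSet.iUnion hcellmeas)).mpr hcover
  have hae2 : ∀ᵐ x ∂μ, ∀ i j, i ≠ j → x ∉ cell i ∩ cell j := by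
    rw [ae_all_iff]; intro i
    rw [ae_all_iff]; intro j
    by_cases hij : i = j
    · simp [hij]
    · filter_upwards [measure_eq_zero_iff_ae_notMem.mp (hnull i j hij)] with x hx _ using hx
  have hb : ∀ᵐ x ∂μ, ‖q x - qhat x‖ ≤ C := by
    filter_upwards [hae1, hae2] with x h1 h2
    obtain ⟨i, hi⟩ := Set.mem_iUnion.mp h1
    rw [hqhat x i hi (fun j hj hxj => h2 j i hj ⟨hxj, hi⟩)]
    have hm : 0 < (μ (cell i)).toReal :=
      ENNReal.toReal_pos (hcellpos i).ne' (measure_ne_top _ _)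
    have hb := norm_setIntegral_le_of_norm_le_const (μ := μ) (s := cell i) (C := C)
      (f := fun y => q x - q y) (measure_lt_top _ _) (fun y hy => hosc i x hi y hy)
    rw [integral_sub (integrable_const _) (hint i), setIntegral_const, smul_eq_mul,
      measureReal_def] at hb
    have he : q x - (μ (cell i)).toReal⁻¹ * ∫ y in cell i, q y ∂μ
        = (μ (cell i)).toReal⁻¹ * ((μ (cell i)).toReal * q x - ∫ y in cell i, q y ∂μ) := by
      field_simp
    rw [he, norm_mul, Real.norm_of_nonneg (inv_nonneg.mpr hm.le), inv_mul_le_iff₀ hm]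
    linarith
  have hfin := eLpNorm_le_of_ae_bound (p := ENNReal.ofReal p) hb
  have hCe : ENNReal.ofReal C = ENNReal.ofReal (2 * (L + H) * ρ) := by
    rw [hC, ENNReal.ofReal_max]; simp
  simpa [hCe] using hfin
end

section
/- Let S_i ⊆ ℝ^d be a measurable set of Euclidean diameter at most ρ > 0, let J : ℝ^d → ℝ^d be Lipschitz with constant L with respect to the Euclidean norm, let n_1, …, n_m ∈ ℝ^d be unit vectors and let N be the m × d matrix whose k-th row is n_kᵀ, and suppose there are constants 0 < c ≤ C with c‖w‖₂ ≤ ‖Nw‖₂ ≤ C‖w‖₂ for all w ∈ ℝ^d. For each k, let σ_k be a finite measure with 0 < σ_k(ℝ^d) < ∞ and σ_k(ℝ^d \ S_i) = 0, define α̂_k := (1/σ_k(ℝ^d)) ∫ ⟨n_k, J(y)⟩ σ_k(dy), let α̂ = (α̂_1, …, α̂_m) ∈ ℝ^m, and define J̃_i := (NᵀN)⁻¹ Nᵀ α̂ ∈ ℝ^d. Then for every x ∈ S_i, ‖J̃_i − J(x)‖₂ ≤ (C/c²) √m · L · ρ. -/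
open MeasureTheory Matrix

theorem aux_norm_sq (k : ℕ) (v : Fin k → ℝ) :
    ‖(EuclideanSpace.equiv (Fin k) ℝ).symm v‖ ^ 2 = v ⬝ᵥ v := by
  rw [EuclideanSpace.norm_sq_eq]
  simp [dotProduct, sq]

theorem le_of_sq_le_sq_aux (a b : ℝ) (h : a ^ 2 ≤ b ^ 2) (hb : 0 ≤ b) : a ≤ b :=
  (le_abs_self a).trans ((sq_le_sq.1 h).trans (abs_of_nonneg hb).le)

theorem aux_cs (k : ℕ) (v w : Fin k → ℝ) :
    v ⬝ᵥ w ≤ ‖(EuclideanSpace.equiv (Fin k) ℝ).symm v‖ *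
      ‖(EuclideanSpace.equiv (Fin k) ℝ).symm w‖ := by
  have h := real_inner_le_norm ((EuclideanSpace.equiv (Fin k) ℝ).symm v)
    ((EuclideanSpace.equiv (Fin k) ℝ).symm w)
  refine le_trans (le_of_eq ?_) h
  simp [PiLp.inner_apply, dotProduct, mul_comm]

/-- **Pointwise error bound (3.13) from the proof of Theorem 3.5.**
Let `S_i ⊆ ℝ^d` have Euclidean diameter at most `ρ`, let `J` be `L`-Lipschitz, let
`n_1, …, n_m` be unit vectors forming the rows of the matrix `N`, whose singular values are
bounded between `c` and `C`.  With `σ_k` finite measures concentrated on `S_i`,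
`α̂_k` the `σ_k`-average of `⟨n_k, J⟩`, and `J̃_i := (NᵀN)⁻¹Nᵀα̂` the least-squares solution of
the normal equations, we have `‖J̃_i − J(x)‖₂ ≤ (C/c²)√m · L · ρ` for every `x ∈ S_i`. -/
theorem approximate_current_pointwise_error_bound
    (d m : ℕ) (Si : Set (EuclideanSpace ℝ (Fin d)))
    (ρ : ℝ) (hρ : 0 < ρ) (hdiam : EMetric.diam Si ≤ ENNReal.ofReal ρ)
    (J : EuclideanSpace ℝ (Fin d) → EuclideanSpace ℝ (Fin d))
    (L : ℝ) (hJ : ∀ x y, ‖J x - J y‖ ≤ L * ‖x - y‖)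
    (n : Fin m → EuclideanSpace ℝ (Fin d)) (hn : ∀ k, ‖n k‖ = 1)
    (N : Matrix (Fin m) (Fin d) ℝ) (hN : ∀ k j, N k j = n k j)
    (c C : ℝ) (hc : 0 < c) (hcC : c ≤ C)
    (hlow : ∀ w : Fin d → ℝ,
      c * ‖(EuclideanSpace.equiv (Fin d) ℝ).symm w‖ ≤
        ‖(EuclideanSpace.equiv (Fin m) ℝ).symm (N.mulVec w)‖)
    (hup : ∀ w : Fin d → ℝ,
      ‖(EuclideanSpace.equiv (Fin m) ℝ).symm (N.mulVec w)‖ ≤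
        C * ‖(EuclideanSpace.equiv (Fin d) ℝ).symm w‖)
    (σ : Fin m → Measure (EuclideanSpace ℝ (Fin d)))
    (hσ0 : ∀ k, σ k Set.univ ≠ 0) (hσfin : ∀ k, σ k Set.univ ≠ ⊤)
    (hσsupp : ∀ k, σ k Siᶜ = 0)
    (αhat : Fin m → ℝ)
    (hαhat : ∀ k, αhat k =
      ((σ k) Set.univ).toReal⁻¹ * ∫ y, (inner ℝ (n k) (J y) : ℝ) ∂(σ k))
    (Jt : Fin d → ℝ) (hJt : Jt = ((Nᵀ * N)⁻¹ * Nᵀ).mulVec αhat) :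
    ∀ x ∈ Si,
      ‖(EuclideanSpace.equiv (Fin d) ℝ).symm Jt - J x‖ ≤
        (C / c ^ 2) * Real.sqrt m * L * ρ := by
  intro x hx
  -- average estimate
  have hβ : ∀ k, |αhat k - N.mulVec (J x) k| ≤ L * ρ := by
    intro k
    have hnk : n k ≠ 0 := by
      intro h
      have := hn k
      simp [h] at this
    have hL : 0 ≤ L := by
      have h1 := hJ (n k) 0
      have h2 : 0 ≤ L * ‖n k - 0‖ := le_trans (norm_nonneg _) h1
      rw [sub_zero, hn k] at h2
      linarith
    have : IsFiniteMeasure (σ k) := ⟨lt_top_iff_ne_top.mpr (hσfin k)⟩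
    have hJc : Continuous J := by
      have : LipschitzWith (Real.toNNReal L) J := by
        apply LipschitzWith.of_dist_le_mul
        intro a b
        rw [dist_eq_norm, dist_eq_norm, Real.coe_toNNReal _ hL]
        exact hJ a b
      exact this.continuous
    have hae : ∀ᵐ y ∂(σ k), ‖(inner ℝ (n k) (J y) : ℝ) - inner ℝ (n k) (J x)‖ ≤ L * ρ := by
      have h0 : ∀ᵐ y ∂(σ k), y ∈ Si := hσsupp k
      filter_upwards [h0] with y hy
      rw [← inner_sub_right]
      have hd : ‖y - x‖ ≤ ρ := by
        have h1 := (EMetric.edist_le_diam_of_mem hy hx).trans hdiam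
        rw [edist_dist] at h1
        rw [← dist_eq_norm]
        exact (ENNReal.ofReal_le_ofReal_iff hρ.le).1 h1
      calc _ ≤ ‖n k‖ * ‖J y - J x‖ := norm_inner_le_norm _ _
        _ = ‖J y - J x‖ := by rw [hn k, one_mul]
        _ ≤ L * ‖y - x‖ := hJ _ _
        _ ≤ L * ρ := by gcongr
    have hm : AEStronglyMeasurable (fun y => (inner ℝ (n k) (J y) : ℝ)) (σ k) :=
      (Continuous.inner continuous_const hJc).aestronglyMeasurable
    have hint : Integrable (fun y => (inner ℝ (n k) (J y) : ℝ)) (σ k) := by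
      refine Integrable.of_bound hm (L * ρ + ‖(inner ℝ (n k) (J x) : ℝ)‖) ?_
      filter_upwards [hae] with y hy
      have := norm_sub_norm_le (inner ℝ (n k) (J y) : ℝ) (inner ℝ (n k) (J x))
      linarith
    have hI := norm_integral_le_of_norm_le_const hae
    rw [integral_sub hint (integrable_const _), integral_const] at hI
    have hpos : 0 < ((σ k) Set.univ).toReal := ENNReal.toReal_pos (hσ0 k) (hσfin k)
    have hNJ : N.mulVec (J x) k = inner ℝ (n k) (J x) := by
      simp [PiLp.inner_apply, mulVec, dotProduct, hN, mul_comm]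
    rw [hNJ, hαhat k]
    simp only [measureReal_def, smul_eq_mul, Real.norm_eq_abs] at hI
    set M := ((σ k) Set.univ).toReal
    set I := ∫ y, (inner ℝ (n k) (J y) : ℝ) ∂(σ k)
    have e1 : M⁻¹ * I - inner ℝ (n k) (J x) = M⁻¹ * (I - M * inner ℝ (n k) (J x)) := by
      field_simp
    rw [e1, abs_mul, abs_of_pos (inv_pos.2 hpos)]
    calc _ ≤ M⁻¹ * (L * ρ * M) := by gcongr
      _ = L * ρ := by field_simp
  -- invertibility
  have hdet : IsUnit (Nᵀ * N) := by
    rw [← Matrix.mulVec_injective_iff_isUnit]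
    rw [← Matrix.coe_mulVecLin, injective_iff_map_eq_zero]
    intro w hw
    rw [Matrix.mulVecLin_apply] at hw
    have h1 : N.mulVec w ⬝ᵥ N.mulVec w = 0 := by
      have : w ⬝ᵥ ((Nᵀ * N).mulVec w) = 0 := by rw [hw]; simp
      rw [← Matrix.mulVec_mulVec, Matrix.dotProduct_mulVec, Matrix.vecMul_transpose] at this
      exact this
    rw [← aux_norm_sq] at h1
    have h2 := hlow w
    rw [pow_eq_zero_iff two_ne_zero] at h1
    rw [h1] at h2
    have h3 : ‖(EuclideanSpace.equiv (Fin d) ℝ).symm w‖ = 0 :=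
      le_antisymm (by by_contra! h; have := mul_pos hc h; linarith) (norm_nonneg _)
    rw [norm_eq_zero] at h3
    simpa using h3
  have hdet' : IsUnit (Nᵀ * N).det := (Matrix.isUnit_iff_isUnit_det _).1 hdet
  set β : Fin m → ℝ := αhat - N.mulVec (J x) with hβdef
  set e : Fin d → ℝ := Jt - (J x : Fin d → ℝ) with he
  have hnormal : (Nᵀ * N).mulVec e = Nᵀ.mulVec β := by
    rw [he, hβdef, hJt, Matrix.mulVec_sub, Matrix.mulVec_sub, Matrix.mulVec_mulVec,
      ← Matrix.mul_assoc, Matrix.mul_nonsing_inv _ hdet', Matrix.one_mul, Matrix.mulVec_mulVec]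
  have heq : (EuclideanSpace.equiv (Fin d) ℝ).symm Jt - J x
      = (EuclideanSpace.equiv (Fin d) ℝ).symm e := by
    ext i
    simp [he]
  rw [heq]
  have h1 : N.mulVec e ⬝ᵥ N.mulVec e = N.mulVec e ⬝ᵥ β := by
    have : e ⬝ᵥ ((Nᵀ * N).mulVec e) = e ⬝ᵥ (Nᵀ.mulVec β) := by rw [hnormal]
    rw [← Matrix.mulVec_mulVec, Matrix.dotProduct_mulVec, Matrix.vecMul_transpose,
      Matrix.dotProduct_mulVec e Nᵀ β, Matrix.vecMul_transpose] at this
    exact this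
  have h2 := aux_cs m (N.mulVec e) β
  rw [← h1, ← aux_norm_sq] at h2
  have h3 := hlow e
  have hb : ‖(EuclideanSpace.equiv (Fin m) ℝ).symm β‖ ≤ Real.sqrt m * (L * ρ) := by
    rcases Nat.eq_zero_or_pos m with h0 | hm
    · subst h0
      simp [EuclideanSpace.norm_eq]
    have hLρ : 0 ≤ L * ρ := le_trans (abs_nonneg _) (hβ ⟨0, hm⟩)
    refine le_of_sq_le_sq_aux _ _ ?_ (by positivity)
    rw [aux_norm_sq, mul_pow, Real.sq_sqrt (Nat.cast_nonneg m)]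
    calc β ⬝ᵥ β ≤ ∑ _k : Fin m, (L * ρ) ^ 2 := by
          apply Finset.sum_le_sum
          intro k _
          rw [← sq, ← sq_abs]
          exact pow_le_pow_left₀ (abs_nonneg _) (hβ k) 2
      _ = m * (L * ρ) ^ 2 := by simp
  set B := ‖(EuclideanSpace.equiv (Fin m) ℝ).symm β‖
  set E := ‖(EuclideanSpace.equiv (Fin d) ℝ).symm e‖
  set F := ‖(EuclideanSpace.equiv (Fin m) ℝ).symm (N.mulVec e)‖
  have hB : 0 ≤ B := norm_nonneg _
  have hE : 0 ≤ E := norm_nonneg _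
  have hF : 0 ≤ F := norm_nonneg _
  have hFB : F ≤ B := by
    by_contra! h
    nlinarith
  have hCpos : 0 < C := hc.trans_le hcC
  have h4 : E ≤ C / c ^ 2 * B := by
    rw [div_mul_eq_mul_div, le_div_iff₀ (by positivity)]
    nlinarith
  calc E ≤ C / c ^ 2 * B := h4
    _ ≤ C / c ^ 2 * (Real.sqrt m * (L * ρ)) := by gcongr
    _ = _ := by ring
end

section
/- Let S ⊆ ℝ^d be a measurable set and μ a probability measure on ℝ^d with μ(S) = 1. Let {S_i}_{i ∈ I} be a finite family of measurable subsets of S with μ(S_i ∩ S_j) = 0 for i ≠ j, μ(⋃_{i ∈ I} S_i) = 1, and diam(S_i) ≤ ρ for every i, where ρ > 0 and diam denotes the Euclidean diameter. Let J : ℝ^d → ℝ^d be Lipschitz with constant L with respect to the Euclidean norm. Suppose for each i ∈ I there are m_i unit vectors n_{i,1}, …, n_{i,m_i} ∈ ℝ^d with associated m_i × d matrix N_i (rows n_{i,k}ᵀ), constants 0 < c_i ≤ C_i with c_i‖w‖₂ ≤ ‖N_i w‖₂ ≤ C_i‖w‖₂ for all w ∈ ℝ^d, and finite measures σ_{i,k}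 with 0 < σ_{i,k}(ℝ^d) < ∞ and σ_{i,k}(ℝ^d \ S_i) = 0. Define α̂_{i,k} := (1/σ_{i,k}(ℝ^d)) ∫ ⟨n_{i,k}, J(y)⟩ σ_{i,k}(dy), J̃_i := (N_iᵀN_i)⁻¹ N_iᵀ α̂_i ∈ ℝ^d, and let J̃ : S → ℝ^d be defined by J̃(x) := J̃_i whenever x lies in exactly one cell S_i (arbitrary on the μ-null remainder). Then ‖J̃ − J‖_{L²(μ; ℝ^d)} ≤ (sup_{i ∈ I} (C_i/c_i²)√(m_i)) · L · ρ. -/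
open MeasureTheory Matrix

lemma aux_lsq (m d : ℕ) (N : Matrix (Fin m) (Fin d) ℝ) (c C : ℝ) (hc : 0 < c) (hcC : c ≤ C)
    (hlow : ∀ w : Fin d → ℝ, c * ‖(EuclideanSpace.equiv (Fin d) ℝ).symm w‖ ≤
        ‖(EuclideanSpace.equiv (Fin m) ℝ).symm (N.mulVec w)‖)
    (hup : ∀ w : Fin d → ℝ, ‖(EuclideanSpace.equiv (Fin m) ℝ).symm (N.mulVec w)‖ ≤
        C * ‖(EuclideanSpace.equiv (Fin d) ℝ).symm w‖)
    (α : Fin m → ℝ) (v : Fin d → ℝ) (B : ℝ) (hB : 0 ≤ B)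
    (h : ∀ k, |α k - N.mulVec v k| ≤ B) :
    ‖(EuclideanSpace.equiv (Fin d) ℝ).symm (((Nᵀ * N)⁻¹ * Nᵀ).mulVec α - v)‖ ≤
      (C / c ^ 2) * Real.sqrt m * B := by
  have hdot : ∀ (p : ℕ) (a b : Fin p → ℝ), a ⬝ᵥ b =
      inner ℝ ((EuclideanSpace.equiv (Fin p) ℝ).symm a)
        ((EuclideanSpace.equiv (Fin p) ℝ).symm b) := by
    intro p a b
    simp [PiLp.inner_apply, dotProduct, mul_comm]
  have hsq : ∀ (p : ℕ) (a : Fin p → ℝ), a ⬝ᵥ a =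
      ‖(EuclideanSpace.equiv (Fin p) ℝ).symm a‖ ^ 2 := by
    intro p a
    rw [hdot, real_inner_self_eq_norm_sq]
  have hdet : IsUnit (Nᵀ * N).det := by
    rw [isUnit_iff_ne_zero]
    intro h0
    obtain ⟨w, hw, hw0⟩ := Matrix.exists_mulVec_eq_zero_iff.mpr h0
    apply hw
    have h1 : N *ᵥ w ⬝ᵥ N *ᵥ w = 0 := by
      rw [Matrix.dotProduct_mulVec, Matrix.vecMul_mulVec, ← Matrix.mulVec_transpose]
      simp [hw0]
    rw [hsq] at h1
    have h2 := hlow w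
    rw [pow_eq_zero_iff (two_ne_zero)] at h1
    rw [h1] at h2
    have h3 : ‖(EuclideanSpace.equiv (Fin d) ℝ).symm w‖ = 0 := by
      nlinarith [norm_nonneg ((EuclideanSpace.equiv (Fin d) ℝ).symm w)]
    simpa using h3
  set e := ((Nᵀ * N)⁻¹ * Nᵀ).mulVec α - v with he
  set β := α - N *ᵥ v with hβ
  have hne : Nᵀ *ᵥ (N *ᵥ e) = Nᵀ *ᵥ β := by
    rw [he, hβ, Matrix.mulVec_sub, Matrix.mulVec_sub, Matrix.mulVec_sub]
    congr 1
    rw [Matrix.mulVec_mulVec, Matrix.mulVec_mulVec, ← Matrix.mul_assoc,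
      Matrix.mul_nonsing_inv _ hdet, Matrix.one_mul]
  have hkey : N *ᵥ e ⬝ᵥ N *ᵥ e = N *ᵥ e ⬝ᵥ β := by
    have := congrArg (fun z => e ⬝ᵥ z) hne
    simp only [Matrix.dotProduct_mulVec e, Matrix.vecMul_transpose] at this
    exact this
  have hβn : ‖(EuclideanSpace.equiv (Fin m) ℝ).symm β‖ ≤ Real.sqrt m * B := by
    refine (sq_le_sq₀ (norm_nonneg _) (by positivity)).mp ?_
    rw [← hsq, mul_pow, Real.sq_sqrt (by positivity)]
    calc β ⬝ᵥ β = ∑ k, β k * β k := rfl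
      _ ≤ ∑ k : Fin m, B ^ 2 := by
        apply Finset.sum_le_sum
        intro k _
        have := h k
        have h2 : |β k| ≤ B := this
        nlinarith [abs_le.mp h2]
      _ = m * B ^ 2 := by simp
  rw [hsq, hdot] at hkey
  have hcs := real_inner_le_norm ((EuclideanSpace.equiv (Fin m) ℝ).symm (N *ᵥ e))
    ((EuclideanSpace.equiv (Fin m) ℝ).symm β)
  have hl := hlow e
  have hu := hup e
  set E := ‖(EuclideanSpace.equiv (Fin d) ℝ).symm e‖
  set F := ‖(EuclideanSpace.equiv (Fin m) ℝ).symm (N *ᵥ e)‖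
  set G := ‖(EuclideanSpace.equiv (Fin m) ℝ).symm β‖
  have hE : 0 ≤ E := norm_nonneg _
  have hG : 0 ≤ G := norm_nonneg _
  have h1 : (c * E) ^ 2 ≤ C * E * (Real.sqrt m * B) := by
    calc (c * E) ^ 2 ≤ F ^ 2 := by gcongr
      _ ≤ F * G := by rw [hkey]; exact hcs
      _ ≤ (C * E) * (Real.sqrt m * B) := by
        apply mul_le_mul hu hβn hG (le_trans (norm_nonneg _) hu)
  have hC : 0 < C := lt_of_lt_of_le hc hcC
  rcases hE.eq_or_lt with h0 | h0
  · rw [← h0]; positivity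
  · have h2 : c ^ 2 * E ≤ C * (Real.sqrt m * B) := by
      apply le_of_mul_le_mul_right _ h0
      nlinarith
    rw [div_mul_eq_mul_div, div_mul_eq_mul_div, le_div_iff₀ (by positivity)]
    nlinarith

lemma aux_avg {E : Type*} [NormedAddCommGroup E] [InnerProductSpace ℝ E] [MeasurableSpace E]
    [BorelSpace E] (A : Set E) (ρ : ℝ) (hρ : 0 < ρ)
    (hdiam : EMetric.diam A ≤ ENNReal.ofReal ρ) (J : E → E) (L : ℝ) (hL : 0 ≤ L)
    (hJ : ∀ x y, ‖J x - J y‖ ≤ L * ‖x - y‖) (n : E) (hn : ‖n‖ = 1)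
    (σ : Measure E) (hσ0 : σ Set.univ ≠ 0) (hσfin : σ Set.univ ≠ ⊤) (hs : σ Aᶜ = 0)
    (x : E) (hx : x ∈ A) :
    |(σ Set.univ).toReal⁻¹ * (∫ y, (inner ℝ n (J y) : ℝ) ∂σ) - inner ℝ n (J x)| ≤ L * ρ := by
  haveI : IsFiniteMeasure σ := ⟨lt_top_iff_ne_top.mpr hσfin⟩
  have hcont : Continuous J := by
    have : LipschitzWith ⟨L, hL⟩ J := LipschitzWith.of_dist_le_mul (by
      intro x y; rw [dist_eq_norm, dist_eq_norm]; exact hJ x y)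
    exact this.continuous
  have hc2 : Continuous fun y => (inner ℝ n (J y - J x) : ℝ) := by fun_prop
  have hb : ∀ᵐ y ∂σ, ‖(inner ℝ n (J y - J x) : ℝ)‖ ≤ L * ρ := by
    have : ∀ᵐ y ∂σ, y ∈ A := hs
    filter_upwards [this] with y hy
    have h1 : dist y x ≤ ρ := by
      have := (EMetric.edist_le_diam_of_mem hy hx).trans hdiam
      rw [edist_dist] at this
      exact (ENNReal.ofReal_le_ofReal_iff hρ.le).mp this
    rw [dist_eq_norm] at h1
    calc ‖(inner ℝ n (J y - J x) : ℝ)‖ ≤ ‖n‖ * ‖J y - J x‖ := norm_inner_le_norm _ _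
      _ = ‖J y - J x‖ := by rw [hn, one_mul]
      _ ≤ L * ‖y - x‖ := hJ _ _
      _ ≤ L * ρ := by gcongr
  have hint : Integrable (fun y => (inner ℝ n (J y - J x) : ℝ)) σ :=
    Integrable.of_bound hc2.measurable.aestronglyMeasurable _ hb
  have hpos : 0 < (σ Set.univ).toReal := ENNReal.toReal_pos hσ0 hσfin
  have heq : ∫ y, (inner ℝ n (J y) : ℝ) ∂σ =
      (∫ y, (inner ℝ n (J y - J x) : ℝ) ∂σ) + (σ Set.univ).toReal * inner ℝ n (J x) := by
    have : ∀ y, (inner ℝ n (J y) : ℝ) = inner ℝ n (J y - J x) + inner ℝ n (J x) := by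
      intro y; rw [inner_sub_right]; ring
    rw [integral_congr_ae (Filter.Eventually.of_forall this)]
    rw [integral_add hint (integrable_const _)]
    simp [Measure.real]
  rw [heq, mul_add, inv_mul_cancel_left₀ hpos.ne', add_sub_cancel_right, abs_mul,
    abs_of_pos (inv_pos.mpr hpos), inv_mul_le_iff₀ hpos]
  have := norm_integral_le_of_norm_le_const hb
  rw [Real.norm_eq_abs] at this
  simpa [Measure.real, mul_comm] using this

/-- **Theorem 3.5 (L²(μ) error bound for the approximate probability current).**
Let `{S_i}_{i ∈ I}` be a finite family of measurable subsets of `S` with pairwise `μ`-null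
intersections, covering `μ`-almost all of `S`, each of Euclidean diameter at most `ρ`.
Let `J` be `L`-Lipschitz; for each cell let `n_{i,1}, …, n_{i,m_i}` be unit vectors forming
the matrix `N_i` with singular values bounded between `c_i` and `C_i`, let `σ_{i,k}` be finite
facet measures concentrated on `S_i`, let `α̂_{i,k}` be the facet averages of the normal
components of `J`, let `J̃_i := (N_iᵀN_i)⁻¹N_iᵀα̂_i`, and let `J̃` be the piecewise-constant
function equal to `J̃_i` on points lying in exactly one cell.  Then
`‖J̃ − J‖_{L²(μ;ℝ^d)} ≤ (sup_i (C_i/c_i²)√m_i) · L · ρ`. -/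
theorem approximate_current_L2_error_bound
    (d : ℕ) {ι : Type} [Fintype ι] [Nonempty ι]
    (S : Set (EuclideanSpace ℝ (Fin d))) (hSmeas : MeasurableSet S)
    (μ : Measure (EuclideanSpace ℝ (Fin d))) [IsProbabilityMeasure μ] (hμS : μ S = 1)
    (cell : ι → Set (EuclideanSpace ℝ (Fin d)))
    (hcellS : ∀ i, cell i ⊆ S)
    (hcellmeas : ∀ i, MeasurableSet (cell i))
    (hnull : ∀ i j, i ≠ j → μ (cell i ∩ cell j) = 0)
    (hcover : μ (⋃ i, cell i) = 1)
    (ρ : ℝ) (hρ : 0 < ρ)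
    (hdiam : ∀ i, EMetric.diam (cell i) ≤ ENNReal.ofReal ρ)
    (J : EuclideanSpace ℝ (Fin d) → EuclideanSpace ℝ (Fin d))
    (L : ℝ) (hJ : ∀ x y, ‖J x - J y‖ ≤ L * ‖x - y‖)
    (m : ι → ℕ) (n : ∀ i, Fin (m i) → EuclideanSpace ℝ (Fin d))
    (hn : ∀ i k, ‖n i k‖ = 1)
    (N : ∀ i, Matrix (Fin (m i)) (Fin d) ℝ) (hN : ∀ i k j, N i k j = n i k j)
    (c C : ι → ℝ) (hc : ∀ i, 0 < c i) (hcC : ∀ i, c i ≤ C i)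
    (hlow : ∀ i, ∀ w : Fin d → ℝ,
      c i * ‖(EuclideanSpace.equiv (Fin d) ℝ).symm w‖ ≤
        ‖(EuclideanSpace.equiv (Fin (m i)) ℝ).symm ((N i).mulVec w)‖)
    (hup : ∀ i, ∀ w : Fin d → ℝ,
      ‖(EuclideanSpace.equiv (Fin (m i)) ℝ).symm ((N i).mulVec w)‖ ≤
        C i * ‖(EuclideanSpace.equiv (Fin d) ℝ).symm w‖)
    (σ : ∀ i, Fin (m i) → Measure (EuclideanSpace ℝ (Fin d)))
    (hσ0 : ∀ i k, σ i k Set.univ ≠ 0) (hσfin : ∀ i k, σ i k Set.univ ≠ ⊤)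
    (hσsupp : ∀ i k, σ i k (cell i)ᶜ = 0)
    (αhat : ∀ i, Fin (m i) → ℝ)
    (hαhat : ∀ i k, αhat i k =
      ((σ i k) Set.univ).toReal⁻¹ * ∫ y, (inner ℝ (n i k) (J y) : ℝ) ∂(σ i k))
    (Jt : ∀ i, Fin d → ℝ)
    (hJt : ∀ i, Jt i = (((N i)ᵀ * N i)⁻¹ * (N i)ᵀ).mulVec (αhat i))
    (Jtilde : EuclideanSpace ℝ (Fin d) → EuclideanSpace ℝ (Fin d))
    (hJtilde : ∀ x, ∀ i, x ∈ cell i → (∀ j, j ≠ i → x ∉ cell j) →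
      Jtilde x = (EuclideanSpace.equiv (Fin d) ℝ).symm (Jt i)) :
    eLpNorm (fun x => Jtilde x - J x) 2 μ ≤
      ENNReal.ofReal ((⨆ i, (C i / c i ^ 2) * Real.sqrt (m i)) * L * ρ) := by
  rcases Nat.eq_zero_or_pos d with hd | hd
  · subst hd
    have : (fun x => Jtilde x - J x) = 0 := by
      funext x; exact Subsingleton.elim _ _
    rw [this]; simp
  have hL : 0 ≤ L := by
    have := (norm_nonneg _).trans (hJ (EuclideanSpace.single (⟨0, hd⟩ : Fin d) (1 : ℝ)) 0)
    simpa using this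
  have hcov : ∀ᵐ x ∂μ, x ∈ ⋃ i, cell i :=
    (prob_compl_eq_zero_iff (MeasurableSet.iUnion hcellmeas)).mpr hcover
  have hdisj : ∀ᵐ x ∂μ, ∀ i j, i ≠ j → x ∉ cell i ∩ cell j := by
    rw [ae_all_iff]; intro i
    rw [ae_all_iff]; intro j
    by_cases hij : i = j
    · simp [hij]
    · have : ∀ᵐ x ∂μ, x ∉ cell i ∩ cell j := measure_eq_zero_iff_ae_notMem.mp (hnull i j hij)
      filter_upwards [this] with x hx _ using hx
  have hbound : ∀ᵐ x ∂μ, ‖Jtilde x - J x‖ ≤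
      (⨆ i, (C i / c i ^ 2) * Real.sqrt (m i)) * L * ρ := by
    filter_upwards [hcov, hdisj] with x hx hxd
    obtain ⟨i, hi⟩ := Set.mem_iUnion.mp hx
    have h1 := hJtilde x i hi (fun j hj hxj => hxd j i hj ⟨hxj, hi⟩)
    have h2 := aux_lsq (m i) d (N i) (c i) (C i) (hc i) (hcC i) (hlow i) (hup i) (αhat i)
      (EuclideanSpace.equiv (Fin d) ℝ (J x)) (L * ρ) (by positivity) (by
        intro k
        have h3 := aux_avg (cell i) ρ hρ (hdiam i) J L hL hJ (n i k) (hn i k) (σ i k)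
          (hσ0 i k) (hσfin i k) (hσsupp i k) x hi
        rw [← hαhat] at h3
        have h4 : (N i).mulVec (EuclideanSpace.equiv (Fin d) ℝ (J x)) k
            = inner ℝ (n i k) (J x) := by
          simp [PiLp.inner_apply, Matrix.mulVec, dotProduct, hN, mul_comm]
        rw [h4]; exact h3)
    rw [← hJt, map_sub, ← h1, ContinuousLinearEquiv.symm_apply_apply] at h2
    refine h2.trans ?_
    rw [mul_assoc _ L ρ]
    apply mul_le_mul_of_nonneg_right _ (by positivity)
    exact le_ciSup (f := fun i => (C i / c i ^ 2) * Real.sqrt (m i)) (Set.finite_range _).bddAbove i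
  refine (eLpNorm_le_of_ae_bound hbound).trans ?_
  simp
end

section
/- In the setting of the L² error bound for the approximate probability current, suppose for each k ∈ ℕ one has a finite family {S_i^k}_{i ∈ I(k)} of measurable subsets of S of Euclidean diameter at most ρ_k, satisfying all the hypotheses of that bound, with associated piecewise-constant approximate probability current J̃^k, and suppose there is a constant 0 < C < ∞, independent of k, with sup_{k ∈ ℕ} sup_{i ∈ I(k)} (C_i^k/(c_i^k)²)√(m_i^k) ≤ C. If J : ℝ^d → ℝ^d is Lipschitz with constant L and ρ_k → 0 as k → ∞, then ‖J̃^k − J‖_{L²(μ; ℝ^d)} ≤ C L ρ_k for every k, and in particular ‖J̃^k − J‖_{L²(μ; ℝ^d)} → 0 as k → ∞. -/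
open MeasureTheory Matrix

/-- The setting of Theorem 3.5 of the paper: a finite family of measurable cells of Euclidean
diameter at most `ρ` covering `μ`-almost all of `S` with pairwise `μ`-null intersections;
for each cell, unit (outer normal) vectors forming a matrix `N_i` whose singular values are
bounded between `c i > 0` and `Cmax i`; finite facet measures concentrated on the cell; and the
piecewise-constant approximate probability current `Jtilde`, equal on each cell (at points lying
in exactly one cell) to the least-squares solution `(N_iᵀN_i)⁻¹N_iᵀα̂_i` of the normal equations,
where `α̂_{i,k}` is the facet average of the normal component `⟨n_{i,k}, J⟩`. -/
structure VoronoiCurrentApprox (d : ℕ) (S : Set (EuclideanSpace ℝ (Fin d)))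
    (μ : Measure (EuclideanSpace ℝ (Fin d)))
    (J : EuclideanSpace ℝ (Fin d) → EuclideanSpace ℝ (Fin d)) (ρ : ℝ) where
  ι : Type
  fin : Fintype ι
  ne : Nonempty ι
  cell : ι → Set (EuclideanSpace ℝ (Fin d))
  cell_subset : ∀ i, cell i ⊆ S
  cell_meas : ∀ i, MeasurableSet (cell i)
  inter_null : ∀ i j, i ≠ j → μ (cell i ∩ cell j) = 0
  cover : μ (⋃ i, cell i) = 1
  diam_le : ∀ i, EMetric.diam (cell i) ≤ ENNReal.ofReal ρ
  m : ι → ℕ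
  n : ∀ i, Fin (m i) → EuclideanSpace ℝ (Fin d)
  n_norm : ∀ i k, ‖n i k‖ = 1
  N : ∀ i, Matrix (Fin (m i)) (Fin d) ℝ
  N_rows : ∀ i k j, N i k j = n i k j
  c : ι → ℝ
  Cmax : ι → ℝ
  c_pos : ∀ i, 0 < c i
  c_le_Cmax : ∀ i, c i ≤ Cmax i
  sv_lower : ∀ i, ∀ w : Fin d → ℝ,
    c i * ‖(EuclideanSpace.equiv (Fin d) ℝ).symm w‖ ≤
      ‖(EuclideanSpace.equiv (Fin (m i)) ℝ).symm ((N i).mulVec w)‖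
  sv_upper : ∀ i, ∀ w : Fin d → ℝ,
    ‖(EuclideanSpace.equiv (Fin (m i)) ℝ).symm ((N i).mulVec w)‖ ≤
      Cmax i * ‖(EuclideanSpace.equiv (Fin d) ℝ).symm w‖
  σ : ∀ i, Fin (m i) → Measure (EuclideanSpace ℝ (Fin d))
  σ_ne_zero : ∀ i k, σ i k Set.univ ≠ 0
  σ_ne_top : ∀ i k, σ i k Set.univ ≠ ⊤
  σ_supp : ∀ i k, σ i k (cell i)ᶜ = 0
  Jtilde : EuclideanSpace ℝ (Fin d) → EuclideanSpace ℝ (Fin d)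
  Jtilde_eq : ∀ x, ∀ i, x ∈ cell i → (∀ j, j ≠ i → x ∉ cell j) →
    Jtilde x = (EuclideanSpace.equiv (Fin d) ℝ).symm
      ((((N i)ᵀ * N i)⁻¹ * (N i)ᵀ).mulVec
        (fun k => ((σ i k) Set.univ).toReal⁻¹ * ∫ y, (inner ℝ (n i k) (J y) : ℝ) ∂(σ i k)))


lemma lsq_bound {m d : ℕ} (N : Matrix (Fin m) (Fin d) ℝ) (c : ℝ) (hc : 0 < c)
    (hlow : ∀ w : Fin d → ℝ, c * ‖(EuclideanSpace.equiv (Fin d) ℝ).symm w‖ ≤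
      ‖(EuclideanSpace.equiv (Fin m) ℝ).symm (N.mulVec w)‖)
    (a : Fin m → ℝ) (v : Fin d → ℝ) (B : ℝ) (hB0 : 0 ≤ B)
    (hB : ∀ k, |a k - N.mulVec v k| ≤ B) :
    c * ‖(EuclideanSpace.equiv (Fin d) ℝ).symm (((Nᵀ * N)⁻¹ * Nᵀ).mulVec a - v)‖
      ≤ Real.sqrt m * B := by
  have hnorm : ∀ (n : ℕ) (w : Fin n → ℝ),
      ‖(EuclideanSpace.equiv (Fin n) ℝ).symm w‖ ^ 2 = w ⬝ᵥ w := by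
    intro n w
    rw [EuclideanSpace.norm_sq_eq]
    simp [dotProduct, sq]
  have hinj : Function.Injective (Nᵀ * N).mulVec := by
    rw [← Matrix.coe_mulVecLin, injective_iff_map_eq_zero]
    intro w hw
    rw [Matrix.mulVecLin_apply] at hw
    have h1 : N.mulVec w ⬝ᵥ N.mulVec w = 0 := by
      rw [← Matrix.mulVec_mulVec] at hw
      rw [Matrix.dotProduct_mulVec, ← Matrix.mulVec_transpose, hw, zero_dotProduct]
    have h2 := hnorm m (N.mulVec w)
    rw [h1] at h2
    have h3 := hlow w
    rw [pow_eq_zero_iff two_ne_zero |>.1 h2] at h3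
    have h4 : ‖(EuclideanSpace.equiv (Fin d) ℝ).symm w‖ = 0 :=
      le_antisymm (by by_contra h; push Not at h; nlinarith [mul_pos hc h]) (norm_nonneg _)
    simpa using h4
  have hunit : IsUnit (Nᵀ * N).det :=
    (Matrix.isUnit_iff_isUnit_det _).1 (Matrix.mulVec_injective_iff_isUnit.1 hinj)
  set e := ((Nᵀ * N)⁻¹ * Nᵀ).mulVec a - v with he
  set δ := a - N.mulVec v with hδ
  have hne : Nᵀ.mulVec (N.mulVec e) = Nᵀ.mulVec δ := by
    rw [he, hδ, Matrix.mulVec_sub, Matrix.mulVec_sub, Matrix.mulVec_sub]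
    congr 1
    rw [Matrix.mulVec_mulVec, Matrix.mulVec_mulVec, ← Matrix.mul_assoc,
      Matrix.mul_nonsing_inv _ hunit, Matrix.one_mul]
  have hdot : N.mulVec e ⬝ᵥ N.mulVec e = δ ⬝ᵥ N.mulVec e := by
    rw [Matrix.dotProduct_mulVec, ← Matrix.mulVec_transpose, hne, Matrix.dotProduct_mulVec,
      ← Matrix.mulVec_transpose]
  clear_value e δ
  have hle : N.mulVec e ⬝ᵥ N.mulVec e ≤ δ ⬝ᵥ δ := by
    have h : 0 ≤ (δ - N.mulVec e) ⬝ᵥ (δ - N.mulVec e) := by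
      rw [← hnorm]; positivity
    rw [sub_dotProduct, dotProduct_sub, dotProduct_sub, dotProduct_comm (N.mulVec e) δ,
      hdot] at h
    rw [hdot]
    linarith
  have hδB : δ ⬝ᵥ δ ≤ m * B ^ 2 := by
    have : ∀ k ∈ (Finset.univ : Finset (Fin m)), δ k * δ k ≤ B ^ 2 := by
      intro k _
      have := hB k
      rw [show a k - N.mulVec v k = δ k by rw [hδ]; rfl] at this
      rw [← sq, ← sq_abs]
      exact pow_le_pow_left₀ (abs_nonneg _) this 2
    simpa [dotProduct] using Finset.sum_le_sum this
  refine (hlow e).trans ?_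
  refine (sq_le_sq₀ (norm_nonneg _) (by positivity)).1 ?_
  rw [hnorm, mul_pow, Real.sq_sqrt (Nat.cast_nonneg m)]
  exact hle.trans hδB

lemma avg_bound {d : ℕ} (J : EuclideanSpace ℝ (Fin d) → EuclideanSpace ℝ (Fin d))
    (L : ℝ) (hL : 0 ≤ L) (hJ : ∀ x y, ‖J x - J y‖ ≤ L * ‖x - y‖) (ρ : ℝ) (hρ : 0 < ρ)
    (A : Set (EuclideanSpace ℝ (Fin d))) (hA : ∀ y ∈ A, ∀ x ∈ A, ‖y - x‖ ≤ ρ)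
    (σ : Measure (EuclideanSpace ℝ (Fin d))) (h0 : σ Set.univ ≠ 0) (h1 : σ Set.univ ≠ ⊤)
    (hs : σ Aᶜ = 0) (n : EuclideanSpace ℝ (Fin d)) (hn : ‖n‖ = 1)
    (x : EuclideanSpace ℝ (Fin d)) (hx : x ∈ A) :
    |(σ Set.univ).toReal⁻¹ * ∫ y, (inner ℝ n (J y) : ℝ) ∂σ - inner ℝ n (J x)| ≤ L * ρ := by
  haveI : IsFiniteMeasure σ := ⟨lt_top_iff_ne_top.2 h1⟩
  have hcont : Continuous J := by
    have : LipschitzWith ⟨L, hL⟩ J := LipschitzWith.of_dist_le_mul (fun a b => by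
      rw [dist_eq_norm, dist_eq_norm]; exact hJ a b)
    exact this.continuous
  have hb : ∀ᵐ y ∂σ, ‖(inner ℝ n (J y) : ℝ) - inner ℝ n (J x)‖ ≤ L * ρ := by
    have : ∀ᵐ y ∂σ, y ∈ A := hs
    filter_upwards [this] with y hy
    rw [← inner_sub_right]
    calc ‖(inner ℝ n (J y - J x) : ℝ)‖ ≤ ‖n‖ * ‖J y - J x‖ := norm_inner_le_norm _ _
      _ ≤ L * ρ := by
        rw [hn, one_mul]
        exact (hJ y x).trans (mul_le_mul_of_nonneg_left (hA y hy x hx) hL)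
  have hci : Continuous (fun y => (inner ℝ n (J y) : ℝ)) := by fun_prop
  have hint' : Integrable (fun y => (inner ℝ n (J y) : ℝ) - inner ℝ n (J x)) σ :=
    Integrable.of_bound (hci.sub continuous_const).aestronglyMeasurable _ hb
  have hint : Integrable (fun y => (inner ℝ n (J y) : ℝ)) σ := by
    refine (hint'.add (integrable_const (inner ℝ n (J x) : ℝ))).congr (ae_of_all _ fun y => ?_)
    simp
  have hpos : 0 < (σ Set.univ).toReal := ENNReal.toReal_pos h0 h1
  have hI := norm_integral_le_of_norm_le_const hb
  rw [integral_sub hint (integrable_const _), integral_const, smul_eq_mul,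
    Real.norm_eq_abs] at hI
  simp only [Measure.real] at hI
  have e1 : (σ Set.univ).toReal⁻¹ * ∫ y, (inner ℝ n (J y) : ℝ) ∂σ - inner ℝ n (J x)
      = (σ Set.univ).toReal⁻¹ * (∫ y, (inner ℝ n (J y) : ℝ) ∂σ -
        (σ Set.univ).toReal * inner ℝ n (J x)) := by
    field_simp
  rw [e1, abs_mul, abs_of_pos (inv_pos.2 hpos), inv_mul_le_iff₀ hpos]
  linarith

/-- **Corollary 3.6 (convergence of the approximate probability current in the continuum
limit).**  Suppose for each `k ∈ ℕ` one has a tessellation of width `ρ_k` satisfying the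
hypotheses of Theorem 3.5, with approximate probability current `J̃^k`, and suppose the
tessellation constants `(C_i^k/(c_i^k)²)√(m_i^k)` are bounded by a constant `C` uniformly in
`k` and `i`.  If `J` is `L`-Lipschitz and `ρ_k → 0`, then
`‖J̃^k − J‖_{L²(μ;ℝ^d)} ≤ C L ρ_k` for every `k`, and in particular
`‖J̃^k − J‖_{L²(μ;ℝ^d)} → 0` as `k → ∞`. -/
theorem approximate_current_continuum_limit
    (d : ℕ) (S : Set (EuclideanSpace ℝ (Fin d))) (hSmeas : MeasurableSet S)
    (μ : Measure (EuclideanSpace ℝ (Fin d))) [IsProbabilityMeasure μ] (hμS : μ S = 1)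
    (J : EuclideanSpace ℝ (Fin d) → EuclideanSpace ℝ (Fin d))
    (L : ℝ) (hL : 0 ≤ L) (hJ : ∀ x y, ‖J x - J y‖ ≤ L * ‖x - y‖)
    (ρ : ℕ → ℝ) (hρpos : ∀ k, 0 < ρ k)
    (hρ0 : Filter.Tendsto ρ Filter.atTop (nhds 0))
    (T : ∀ k : ℕ, VoronoiCurrentApprox d S μ J (ρ k))
    (C : ℝ) (hC0 : 0 < C)
    (hCbound : ∀ k, ∀ i : (T k).ι,
      ((T k).Cmax i / (T k).c i ^ 2) * Real.sqrt ((T k).m i) ≤ C) :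
    (∀ k, eLpNorm (fun x => (T k).Jtilde x - J x) 2 μ ≤ ENNReal.ofReal (C * L * ρ k)) ∧
      Filter.Tendsto (fun k => eLpNorm (fun x => (T k).Jtilde x - J x) 2 μ)
        Filter.atTop (nhds 0) := by
  have main : ∀ k, eLpNorm (fun x => (T k).Jtilde x - J x) 2 μ
      ≤ ENNReal.ofReal (C * L * ρ k) := by
    intro k
    have hae : ∀ᵐ x ∂μ, ‖(T k).Jtilde x - J x‖ ≤ C * L * ρ k := by
      haveI := (T k).fin
      have hcov : ∀ᵐ x ∂μ, x ∈ ⋃ i, (T k).cell i :=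
        (prob_compl_eq_zero_iff (MeasurableSet.iUnion (T k).cell_meas)).2 (T k).cover
      have hdis : ∀ᵐ x ∂μ, ∀ i j, i ≠ j → x ∉ (T k).cell i ∩ (T k).cell j := by
        rw [ae_all_iff]; intro i
        rw [ae_all_iff]; intro j
        by_cases hij : i = j
        · simp [hij]
        · filter_upwards [measure_eq_zero_iff_ae_notMem.1 ((T k).inter_null i j hij)] with x hx _
          exact hx
      filter_upwards [hcov, hdis] with x hx hd
      obtain ⟨i, hi⟩ := Set.mem_iUnion.1 hx
      rw [(T k).Jtilde_eq x i hi (fun j hj hxj => hd j i hj ⟨hxj, hi⟩)]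
      have hA : ∀ y ∈ (T k).cell i, ∀ x ∈ (T k).cell i, ‖y - x‖ ≤ ρ k := by
        intro y hy z hz
        have := (Metric.edist_le_ediam_of_mem hy hz).trans ((T k).diam_le i)
        rwa [edist_dist, ENNReal.ofReal_le_ofReal_iff (hρpos k).le, dist_eq_norm] at this
      have hLρ : 0 ≤ L * ρ k := mul_nonneg hL (hρpos k).le
      have hc := (T k).c_pos i
      have key := lsq_bound ((T k).N i) ((T k).c i) hc ((T k).sv_lower i)
        (fun l => (((T k).σ i l) Set.univ).toReal⁻¹ *
          ∫ y, (inner ℝ ((T k).n i l) (J y) : ℝ) ∂((T k).σ i l))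
        (fun j => J x j) (L * ρ k) hLρ (by
          intro l
          have := avg_bound J L hL hJ (ρ k) (hρpos k) _ hA ((T k).σ i l) ((T k).σ_ne_zero i l)
            ((T k).σ_ne_top i l) ((T k).σ_supp i l) ((T k).n i l) ((T k).n_norm i l) x hi
          have e : ((T k).N i).mulVec (fun j => J x j) l = inner ℝ ((T k).n i l) (J x) := by
            simp [Matrix.mulVec, dotProduct, PiLp.inner_apply, (T k).N_rows, mul_comm]
          rw [e]
          exact this)
      rw [map_sub] at key
      have e2 : (EuclideanSpace.equiv (Fin d) ℝ).symm (fun j => J x j) = J x := rfl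
      rw [e2, ← le_div_iff₀' hc] at key
      refine key.trans ?_
      have hCb := hCbound k i
      have h1 : Real.sqrt ((T k).m i) / (T k).c i ≤ C := by
        refine le_trans ?_ hCb
        rw [div_mul_eq_mul_div, div_le_div_iff₀ hc (by positivity)]
        have := mul_le_mul_of_nonneg_left ((T k).c_le_Cmax i)
          (mul_nonneg (Real.sqrt_nonneg ((T k).m i)) hc.le)
        nlinarith
      calc Real.sqrt ((T k).m i) * (L * ρ k) / (T k).c i
          = Real.sqrt ((T k).m i) / (T k).c i * (L * ρ k) := by ring
        _ ≤ C * (L * ρ k) := mul_le_mul_of_nonneg_right h1 hLρ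
        _ = C * L * ρ k := by ring
    simpa using eLpNorm_le_of_ae_bound (p := 2) hae
  refine ⟨main, ?_⟩
  refine tendsto_of_tendsto_of_tendsto_of_le_of_le tendsto_const_nhds ?_ (fun _ => zero_le) main
  have := ENNReal.tendsto_ofReal (hρ0.const_mul (C * L))
  simpa using this
end
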